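/- Let C be a chain complex of abelian groups in which every term C_n is a free abelian group, and let G be an abelian group. For every integer n there is a short exact sequence of abelian groups 0 → H_n(C) ⊗_ℤ G → H_n(C ⊗_ℤ G) → Tor₁^ℤ(H_{n−1}(C), G) → 0, where C ⊗_ℤ G denotes the chain complex with n-th term C_n ⊗_ℤ G and differentials d ⊗ id. -/

import Mathlib

/-!
Write `F` for the functor `- ⊗ G`, which is right exact, `Zₙ` for the cycles of `C`, and `B` for the
image of `Cₙ ⟶ Cₙ₋₁`. There are short exact sequences
`0 ⟶ Hₙ(C) ⟶ Cₙ / im d ⟶ B ⟶ 0` and `0 ⟶ B ⟶ Zₙ₋₁ ⟶ Hₙ₋₁(C) ⟶ 0`.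

Subgroups of free abelian groups are projective (`projective_of_mono`), so `B`, `Zₙ₋₁` and the image
of `Cₙ₋₁ ⟶ Cₙ₋₂` are projective. Three facts follow.

* The first sequence splits, and stays split after applying `F`.
* The second one is a projective resolution of `Hₙ₋₁(C)`, so that `Tor₁(Hₙ₋₁(C), G)` is the kernel
  of `F(B) ⟶ F(Zₙ₋₁)` (`exists_kernel_leftDerived_one`).
* `Zₙ₋₁ ⟶ Cₙ₋₁` is a split monomorphism, so `F(Zₙ₋₁) ⟶ F(Cₙ₋₁)` is a monomorphism.

As `F` commutes with cokernels, `Hₙ(F(C))` is the kernel of `F(Cₙ / im d) ⟶ F(Cₙ₋₁)`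
(`exists_homology_kernel`), which by the third fact is the kernel of
`F(Cₙ / im d) ⟶ F(B) ⟶ F(Zₙ₋₁)`. Since the first map of this composition is a split epimorphism
with kernel `F(Hₙ(C))`, the kernel of the composition is an extension of the kernel of
`F(B) ⟶ F(Zₙ₋₁)` by `F(Hₙ(C))` (`exists_shortExact_of_splitting`).
-/

open CategoryTheory CategoryTheory.MonoidalCategory
namespace UCT
open Limits
universe v u v' u'

/-- By Baer's criterion: a map from an ideal `J` of `ℤ` to `Q` lifts to `I` because `J` is projective,
and the lift extends to `ℤ` because `I` is injective. -/
lemma injective_quotient {I Q : ModuleCat.{0} ℤ} (p : I ⟶ Q) [Injective I] [Epi p] :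
    Injective Q := by
  have hI : Module.Injective ℤ I := Module.injective_module_of_injective_object ℤ I
  have hp := (ModuleCat.epi_iff_surjective p).1 inferInstance
  refine @Module.injective_object_of_injective_module _ _ _ _ _ (inj := Module.Baer.injective fun J g => ?_)
  obtain ⟨g', hg'⟩ := Module.projective_lifting_property p.hom g hp
  obtain ⟨h, hh⟩ := Module.Baer.of_injective hI J g'
  refine ⟨p.hom ∘ₗ h, fun x hx => ?_⟩
  rw [LinearMap.comp_apply, hh x hx, ← hg']
  rfl

/-- Subobjects of projective abelian groups are projective, because quotients of injective ones are
injective. To lift `a : A ⟶ Y` along `e : X ⟶ Y`, embed `X` into an injective `I`; the pushout of `e`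
along this embedding is a quotient of `I`, hence injective. -/
lemma projective_of_mono {A P : ModuleCat.{0} ℤ} (i : A ⟶ P) [Mono i] [Projective P] :
    Projective A where
  factors {X Y} a e _ := by
    obtain ⟨I, _, j, _⟩ : ∃ (I : ModuleCat.{0} ℤ) (_ : Injective I) (j : X ⟶ I), Mono j :=
      ⟨_, inferInstance, Injective.ι X, inferInstance⟩
    have : Injective (pushout e j) := injective_quotient (pushout.inr e j)
    -- extend `A ⟶ Y ⟶ Y ⊔_X I` along `i`, then lift the extension from `P` to `I`
    let b : P ⟶ pushout e j := Injective.factorThru (a ≫ pushout.inl e j) i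
    let u : A ⟶ I := i ≫ Projective.factorThru b (pushout.inr e j)
    have hu : u ≫ pushout.inr e j = a ≫ pushout.inl e j := by simp [u, b]
    have hc : u ≫ cokernel.π j = 0 := by
      have : cokernel.π j = pushout.inr e j ≫ pushout.desc 0 (cokernel.π j) (by simp) :=
        (pushout.inr_desc _ _ _).symm
      rw [this, reassoc_of% hu, pushout.inl_desc, comp_zero]
    have hex : (ShortComplex.mk j (cokernel.π j) (by simp)).Exact :=
      ShortComplex.exact_of_g_is_cokernel _ (cokernelIsCokernel j)
    have : Mono (ShortComplex.mk j (cokernel.π j) (by simp)).f := ‹Mono j›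
    have hlift : hex.lift u hc ≫ j = u := hex.lift_f u hc
    refine ⟨hex.lift u hc, ?_⟩
    rw [← cancel_mono (pushout.inl e j), ← hu, Category.assoc, pushout.condition,
      reassoc_of% hlift]

variable {𝒜 : Type u} [Category.{v} 𝒜] [Abelian 𝒜] {𝒟 : Type u'} [Category.{v'} 𝒟] [Abelian 𝒟]

/-- If `0 ⟶ X₁ ⟶ X₂ ⟶ X₃ ⟶ 0` splits, then for any `q : X₃ ⟶ W` the kernel `H` of `X₂ ⟶ X₃ ⟶ W` is
an extension of the kernel `T` of `q` by `X₁`. -/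
lemma exists_shortExact_of_splitting {S : ShortComplex 𝒜} (s : S.Splitting) {H T W : 𝒜}
    (q : S.X₃ ⟶ W) (ι : H ⟶ S.X₂) (hι₀ : ι ≫ S.g ≫ q = 0)
    (hι : (ShortComplex.mk ι (S.g ≫ q) hι₀).Exact) (hιm : Mono ι)
    (κ : T ⟶ S.X₃) (hκ₀ : κ ≫ q = 0) (hκ : (ShortComplex.mk κ q hκ₀).Exact) (hκm : Mono κ) :
    ∃ (f : S.X₁ ⟶ H) (g : H ⟶ T) (w : f ≫ g = 0), (ShortComplex.mk f g w).ShortExact := by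
  have : Mono (ShortComplex.mk ι (S.g ≫ q) hι₀).f := hιm
  have : Mono (ShortComplex.mk κ q hκ₀).f := hκm
  let f : S.X₁ ⟶ H := hι.lift S.f (by simp)
  have hf : f ≫ ι = S.f := hι.lift_f _ _
  let g : H ⟶ T := hκ.lift (ι ≫ S.g) (by simpa using hι₀)
  have hg : g ≫ κ = ι ≫ S.g := hκ.lift_f _ _
  let t : T ⟶ H := hι.lift (κ ≫ s.s) (by simp [hκ₀])
  have ht : t ≫ ι = κ ≫ s.s := hι.lift_f _ _
  have w : f ≫ g = 0 := by
    rw [← cancel_mono κ, Category.assoc, hg, reassoc_of% hf, S.zero, zero_comp]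
  refine ⟨f, g, w, ShortComplex.Splitting.shortExact
    { r := ι ≫ s.r, s := t, f_r := ?_, s_g := ?_, id := ?_ }⟩
  · simp [reassoc_of% hf]
  · dsimp
    rw [← cancel_mono κ, Category.assoc, hg, reassoc_of% ht, s.s_g]
    simp
  · dsimp
    rw [← cancel_mono ι, Preadditive.add_comp, Category.assoc, Category.assoc, Category.assoc, hf,
      ht, reassoc_of% hg, ← Preadditive.comp_add, s.id, Category.comp_id, Category.id_comp]

lemma down_rel : (ComplexShape.down ℕ).Rel 1 0 := rfl

/-- The chain complex `⋯ ⟶ 0 ⟶ X ⟶ Y` given by `f`, with `Y` in degree `0`. -/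
noncomputable abbrev twoTerm {X Y : 𝒜} (f : X ⟶ Y) : ChainComplex 𝒜 ℕ :=
  HomologicalComplex.double f down_rel

/-- A short exact sequence `0 ⟶ X₁ ⟶ X₂ ⟶ X₃ ⟶ 0` with `X₁` and `X₂` projective, as a projective
resolution of `X₃` of length one. -/
noncomputable def resolution {S : ShortComplex 𝒜} (hS : S.ShortExact)
    [Projective S.X₁] [Projective S.X₂] :
    ProjectiveResolution S.X₃ where
  complex := twoTerm S.f
  projective n := by
    by_cases h1 : n = 1
    · subst h1
      exact Projective.of_iso (HomologicalComplex.doubleXIso₀ S.f down_rel).symm inferInstance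
    by_cases h0 : n = 0
    · subst h0
      exact Projective.of_iso (HomologicalComplex.doubleXIso₁ S.f down_rel (by simp)).symm inferInstance
    · exact (HomologicalComplex.isZero_double_X S.f down_rel n h1 h0).projective
  π := (ChainComplex.toSingle₀Equiv _ _).symm
    ⟨(HomologicalComplex.doubleXIso₁ S.f down_rel (by simp)).hom ≫ S.g, by
      rw [HomologicalComplex.double_d _ _ (by simp)]; simp⟩
  quasiIso := ⟨fun n => by
    cases n with
    | zero =>
      rw [ChainComplex.quasiIsoAt₀_iff, ShortComplex.quasiIso_iff_of_zeros']
      · refine (ShortComplex.exact_and_epi_g_iff_of_iso ?_).2 ⟨hS.exact, hS.epi_g⟩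
        have h : (HomologicalComplex.doubleXIso₀ S.f down_rel).hom ≫ S.f =
            ((HomologicalComplex.doubleXIso₀ S.f down_rel).hom ≫ S.f ≫
              (HomologicalComplex.doubleXIso₁ S.f down_rel (by simp)).inv) ≫
            (HomologicalComplex.doubleXIso₁ S.f down_rel (by simp)).hom := by simp
        exact ShortComplex.isoMk (HomologicalComplex.doubleXIso₀ S.f down_rel)
          (HomologicalComplex.doubleXIso₁ S.f down_rel (by simp)) (Iso.refl _)
          (h.trans (congrArg (· ≫ _) (HomologicalComplex.double_d S.f down_rel (by simp)).symm))
          (by simp; exact (Category.comp_id _).symm)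
      · exact HomologicalComplex.double_d_eq_zero₀ S.f down_rel _ _ (by simp)
      all_goals rfl
    | succ n =>
      rw [quasiIsoAt_iff_exactAt' _ _ (ChainComplex.exactAt_succ_single_obj _ _)]
      rw [HomologicalComplex.exactAt_iff' _ (n + 2) (n + 1) n (by simp) (by simp)]
      cases n with
      | zero =>
        rw [ShortComplex.exact_iff_mono _ (HomologicalComplex.double_d_eq_zero₀ S.f down_rel _ _ (by simp))]
        have := hS.mono_f
        change Mono ((twoTerm S.f).d 1 0)
        rw [HomologicalComplex.double_d _ _ (by simp)]
        infer_instance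
      | succ n =>
        exact ShortComplex.exact_of_isZero_X₂ _
          (HomologicalComplex.isZero_double_X S.f down_rel _ (by simp) (by simp))⟩

/-- The first left derived functor at `X₃`, computed from the resolution `X₁ ⟶ X₂` as the homology of
`F(X₁) ⟶ F(X₂)` in degree `1`. -/
lemma exists_kernel_leftDerived_one (F : 𝒜 ⥤ 𝒟) [F.Additive] [HasProjectiveResolutions 𝒜]
    {S : ShortComplex 𝒜} (hS : S.ShortExact) [Projective S.X₁] [Projective S.X₂] :
    ∃ (κ : (F.leftDerived 1).obj S.X₃ ⟶ F.obj S.X₁) (w : κ ≫ F.map S.f = 0),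
      (ShortComplex.mk κ (F.map S.f) w).Exact ∧ Mono κ := by
  let K := (F.mapHomologicalComplex _).obj (resolution hS).complex
  have h21 : K.d 2 1 = 0 := by
    change F.map _ = 0
    dsimp [resolution]
    rw [HomologicalComplex.double_d_eq_zero₀ S.f down_rel _ _ (by simp), F.map_zero]
    rfl
  have h10 : K.d 1 0 = F.map (HomologicalComplex.doubleXIso₀ S.f down_rel).hom ≫ F.map S.f ≫
      F.map (HomologicalComplex.doubleXIso₁ S.f down_rel (by simp)).inv := by
    change F.map _ = _
    dsimp [resolution]
    rw [HomologicalComplex.double_d _ _ (by simp), F.map_comp, F.map_comp]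
  have : IsIso (K.homologyπ 1) := K.isIso_homologyπ 2 1 (by simp) h21
  let e : (F.leftDerived 1).obj S.X₃ ≅ K.cycles 1 :=
    (resolution hS).isoLeftDerivedObj F 1 ≪≫ (asIso (K.homologyπ 1)).symm
  let a : K.X 1 ≅ F.obj S.X₁ := F.mapIso (HomologicalComplex.doubleXIso₀ S.f down_rel)
  let b : K.X 0 ≅ F.obj S.X₂ := F.mapIso (HomologicalComplex.doubleXIso₁ S.f down_rel (by simp))
  have hab : a.hom ≫ F.map S.f = K.d 1 0 ≫ b.hom := by
    have h10' : K.d 1 0 = a.hom ≫ F.map S.f ≫ b.inv := h10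
    rw [h10', Category.assoc, Category.assoc, b.inv_hom_id, Category.comp_id]
  have w : (e.hom ≫ K.iCycles 1 ≫ a.hom) ≫ F.map S.f = 0 := by
    rw [Category.assoc, Category.assoc, hab, K.iCycles_d_assoc, zero_comp, comp_zero]
  refine ⟨e.hom ≫ K.iCycles 1 ≫ a.hom, w, ?_, inferInstance⟩
  have hex : (ShortComplex.mk (K.iCycles 1) (K.d 1 0) (by simp)).Exact :=
    ShortComplex.exact_of_f_is_kernel _ (K.cyclesIsKernel 1 0 (by simp))
  exact ShortComplex.exact_of_iso (ShortComplex.isoMk e.symm a b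
    (e.inv_hom_id_assoc _) hab) hex

/-- A right exact functor commutes with the cokernels `C.opcycles n`, so the homology of `F(C)`
in degree `n` is the kernel of the map `F(Cₙ / im d) ⟶ F(C_m)` induced by the differential. -/
lemma exists_homology_kernel (F : 𝒜 ⥤ 𝒟) [F.Additive] [PreservesFiniteColimits F]
    (C : ChainComplex 𝒜 ℤ) {n m : ℤ} (hrel : (ComplexShape.down ℤ).Rel n m) :
    ∃ (ι : ((F.mapHomologicalComplex (ComplexShape.down ℤ)).obj C).homology n ⟶
        F.obj (C.opcycles n)) (w : ι ≫ F.map (C.fromOpcycles n m) = 0),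
      (ShortComplex.mk ι (F.map (C.fromOpcycles n m)) w).Exact ∧ Mono ι := by
  have hrel' : (ComplexShape.down ℤ).Rel (n + 1) n := by simp
  obtain ⟨K, hK⟩ : ∃ K, K = (F.mapHomologicalComplex (ComplexShape.down ℤ)).obj C := ⟨_, rfl⟩
  obtain ⟨e, c, h⟩ : ∃ (e : K.opcycles n ≅ F.obj (C.opcycles n)) (c : F.obj (C.X m) ≅ K.X m),
      e.hom ≫ F.map (C.fromOpcycles n m) ≫ c.hom = K.fromOpcycles n m := by
    subst hK
    let K := (F.mapHomologicalComplex (ComplexShape.down ℤ)).obj C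
    let e : K.opcycles n ≅ F.obj (C.opcycles n) :=
      (K.opcyclesIsCokernel (n + 1) n
        ((ComplexShape.down ℤ).prev_eq' hrel')).coconePointUniqueUpToIso
      (CokernelCofork.mapIsColimit _ (C.opcyclesIsCokernel (n + 1) n
        ((ComplexShape.down ℤ).prev_eq' hrel')) F)
    have he : K.pOpcycles n ≫ e.hom = F.map (C.pOpcycles n) :=
      IsColimit.comp_coconePointUniqueUpToIso_hom
        (K.opcyclesIsCokernel (n + 1) n ((ComplexShape.down ℤ).prev_eq' hrel'))
        (CokernelCofork.mapIsColimit _ (C.opcyclesIsCokernel (n + 1) n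
          ((ComplexShape.down ℤ).prev_eq' hrel')) F) WalkingParallelPair.one
    let c : F.obj (C.X m) ≅ K.X m := Iso.refl _
    have hd : F.map (C.d n m) ≫ c.hom = K.d n m := Category.comp_id _
    refine ⟨e, c, ?_⟩
    rw [← cancel_epi (K.pOpcycles n)]
    refine Eq.trans ?_ (K.p_fromOpcycles n m).symm
    -- the rewriting below happens away from `K.X n`, which is only definitionally `F.obj (C.X n)`
    have hp {Z : 𝒟} (z : F.obj (C.X m) ⟶ Z) :
        F.map (C.pOpcycles n) ≫ F.map (C.fromOpcycles n m) ≫ z = F.map (C.d n m) ≫ z := by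
      rw [← F.map_comp_assoc, C.p_fromOpcycles]
    rw [reassoc_of% he]
    exact (hp c.hom).trans hd
  rw [← hK]
  have w : (K.homologyι n ≫ e.hom) ≫ F.map (C.fromOpcycles n m) = 0 := by
    rw [← cancel_mono c.hom, Category.assoc, Category.assoc, h, zero_comp,
      K.homologyι_comp_fromOpcycles]
  refine ⟨K.homologyι n ≫ e.hom, w, ?_, inferInstance⟩
  have hex : (ShortComplex.mk (K.homologyι n) (K.fromOpcycles n m) (by simp)).Exact :=
    ShortComplex.exact_of_f_is_kernel _
      (K.homologyIsKernel n m ((ComplexShape.down ℤ).next_eq' hrel))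
  let E : ShortComplex.mk (K.homologyι n) (K.fromOpcycles n m) (by simp) ≅
      ShortComplex.mk (K.homologyι n ≫ e.hom) (F.map (C.fromOpcycles n m)) w :=
    ShortComplex.isoMk (Iso.refl _) e c.symm (by simp) (by simp [← h])
  exact ShortComplex.exact_of_iso E hex

/-- The universal coefficient sequence for an additive right exact functor `F` and a chain complex
`C` all of whose terms have only projective subobjects. -/
lemma universal_coefficients (F : 𝒜 ⥤ 𝒟) [F.Additive] [PreservesFiniteColimits F]
    [HasProjectiveResolutions 𝒜] (C : ChainComplex 𝒜 ℤ)
    (hC : ∀ (n : ℤ) {A : 𝒜} (i : A ⟶ C.X n), Mono i → Projective A) (n : ℤ) :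
    ∃ (f : F.obj (C.homology n) ⟶ ((F.mapHomologicalComplex _).obj C).homology n)
      (g : ((F.mapHomologicalComplex _).obj C).homology n ⟶
        (F.leftDerived 1).obj (C.homology (n - 1))) (w : f ≫ g = 0),
      (ShortComplex.mk f g w).ShortExact := by
  have hrel : (ComplexShape.down ℤ).Rel n (n - 1) := by simp
  have hrel' : (ComplexShape.down ℤ).Rel (n - 1) (n - 1 - 1) := by simp
  let φ := C.opcyclesToCycles n (n - 1)
  -- the image `B` of the boundary map, between `Cₙ / im d` and the cycles in degree `n - 1`
  let B := Abelian.image φ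
  let p : C.opcycles n ⟶ B := Abelian.factorThruImage φ
  let b : B ⟶ C.cycles (n - 1) := Abelian.image.ι φ
  have hpb : p ≫ b = φ := Abelian.image.fac φ
  have hEx := HomologicalComplex.HomologySequence.composableArrows₃_exact C n (n - 1) hrel
  have hEx₁ : (ShortComplex.mk (C.homologyι n) φ (by simp [φ])).Exact := hEx.exact 0
  have hEx₂ : (ShortComplex.mk φ (C.homologyπ (n - 1)) (by simp [φ])).Exact := hEx.exact 1
  have hp0 : C.homologyι n ≫ p = 0 := by
    rw [← cancel_mono b, Category.assoc, hpb, zero_comp]; simp [φ]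
  have hb0 : b ≫ C.homologyπ (n - 1) = 0 := by
    rw [← cancel_epi p, reassoc_of% hpb, comp_zero]; simp [φ]
  have hS₁ : (ShortComplex.mk (C.homologyι n) p hp0).ShortExact :=
    { exact := by
        let τ : ShortComplex.mk (C.homologyι n) p hp0 ⟶
            ShortComplex.mk (C.homologyι n) φ (by simp [φ]) :=
          { τ₁ := 𝟙 _, τ₂ := 𝟙 _, τ₃ := b }
        exact (ShortComplex.exact_iff_of_epi_of_isIso_of_mono τ).2 hEx₁ }
  have hS₂ : (ShortComplex.mk b (C.homologyπ (n - 1)) hb0).ShortExact :=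
    { exact := by
        let τ : ShortComplex.mk φ (C.homologyπ (n - 1)) (by simp [φ]) ⟶
            ShortComplex.mk b (C.homologyπ (n - 1)) hb0 :=
          { τ₁ := p, τ₂ := 𝟙 _, τ₃ := 𝟙 _ }
        exact (ShortComplex.exact_iff_of_epi_of_isIso_of_mono τ).1 hEx₂ }
  have : Projective B := hC (n - 1) (b ≫ C.iCycles (n - 1)) inferInstance
  have : Projective (C.cycles (n - 1)) := hC (n - 1) (C.iCycles (n - 1)) inferInstance
  have s := hS₁.splittingOfProjective
  -- the cycles split off, since the image of the next differential is projective
  have hmono : Mono (F.map (C.iCycles (n - 1))) := by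
    let d := C.d (n - 1) (n - 1 - 1)
    have hd : C.iCycles (n - 1) ≫ Abelian.factorThruImage d = 0 := by
      rw [← cancel_mono (Abelian.image.ι d), Category.assoc, Abelian.image.fac, zero_comp]
      simp [d]
    have hS : (ShortComplex.mk (C.iCycles (n - 1)) (Abelian.factorThruImage d) hd).ShortExact :=
      { exact := by
          let τ : ShortComplex.mk (C.iCycles (n - 1)) (Abelian.factorThruImage d) hd ⟶
              ShortComplex.mk (C.iCycles (n - 1)) d (by simp [d]) :=
            { τ₁ := 𝟙 _, τ₂ := 𝟙 _, τ₃ := Abelian.image.ι d }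
          exact (ShortComplex.exact_iff_of_epi_of_isIso_of_mono τ).2
            (ShortComplex.exact_of_f_is_kernel _
              (C.cyclesIsKernel (n - 1) (n - 1 - 1) ((ComplexShape.down ℤ).next_eq' hrel'))) }
    have : Projective (Abelian.image d) := hC _ (Abelian.image.ι d) inferInstance
    exact (hS.splittingOfProjective.map F).mono_f
  obtain ⟨κ, hκ₀, hκ, hκm⟩ := exists_kernel_leftDerived_one F hS₂
  obtain ⟨ι, hι₀, hι, hιm⟩ := exists_homology_kernel F C hrel
  let q : F.obj B ⟶ F.obj (C.cycles (n - 1)) := F.map b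
  have hq : F.map (C.fromOpcycles n (n - 1)) = (F.map p ≫ q) ≫ F.map (C.iCycles (n - 1)) := by
    rw [← F.map_comp, ← F.map_comp, hpb, C.opcyclesToCycles_iCycles]
  have hι₁ : ι ≫ F.map p ≫ q = 0 := by
    rw [← cancel_mono (F.map (C.iCycles (n - 1))), Category.assoc, ← hq, hι₀, zero_comp]
  -- composing with the monomorphism `F(Z) ⟶ F(C)` does not change the kernel
  have hι' : (ShortComplex.mk ι (F.map p ≫ q) hι₁).Exact := by
    let τ : ShortComplex.mk ι (F.map p ≫ q) hι₁ ⟶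
        ShortComplex.mk ι (F.map (C.fromOpcycles n (n - 1))) hι₀ :=
      { τ₁ := 𝟙 _, τ₂ := 𝟙 _, τ₃ := F.map (C.iCycles (n - 1))
        comm₂₃ := by dsimp only; rw [Category.id_comp, hq] }
    have : Mono τ.τ₃ := hmono
    exact (ShortComplex.exact_iff_of_epi_of_isIso_of_mono τ).2 hι
  exact exists_shortExact_of_splitting (s.map F) q ι hι₁ hι' hιm κ hκ₀ hκ hκm

end UCT

/-- The universal coefficient theorem for homology: for a chain complex `C` of abelian groups
(`ℤ`-modules) with all terms free and an abelian group `G`, for every integer `n` there is a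
short exact sequence
`0 → H_n(C) ⊗_ℤ G → H_n(C ⊗_ℤ G) → Tor₁^ℤ(H_{n−1}(C), G) → 0`,
where `C ⊗_ℤ G` is the chain complex with `n`-th term `C_n ⊗_ℤ G` and differentials `d ⊗ id`
(obtained by applying the functor `− ⊗_ℤ G` to `C`), and `Tor₁^ℤ(−, G)` is the first left
derived functor of `− ⊗_ℤ G`. -/
theorem universal_coefficients_for_homology
    (C : ChainComplex (ModuleCat ℤ) ℤ) (hC : ∀ n : ℤ, Module.Free ℤ (C.X n))
    (G : ModuleCat ℤ) (n : ℤ) :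
    ∃ (f : C.homology n ⊗ G ⟶
        (((tensorRight G).mapHomologicalComplex (ComplexShape.down ℤ)).obj C).homology n)
      (g : (((tensorRight G).mapHomologicalComplex (ComplexShape.down ℤ)).obj C).homology n ⟶
        ((Tor' (ModuleCat ℤ) 1).obj (C.homology (n - 1))).obj G)
      (w : f ≫ g = 0),
      (ShortComplex.mk f g w).ShortExact := by
  have hadj : (tensorRight G).IsLeftAdjoint := inferInstance
  have := (Adjunction.ofIsLeftAdjoint (tensorRight G)).leftAdjoint_preservesColimits
  refine UCT.universal_coefficients (tensorRight G) C (fun n A i _ => ?_) n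
  have : Projective (C.X n) := ModuleCat.projective_of_free (Module.Free.chooseBasis ℤ (C.X n))
  exact UCT.projective_of_mono i
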